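/- Let q be a prime power and let (P_i) be a sequence of integral convex polytopes with P_i ⊆ [0,q−2]^{n_i}, whose relative minimum distances δ(P_i) converge to a limit δ. If the sequence of full Minkowski lengths (L(P_i)) is unbounded, then δ = 0. -/

import Mathlib

open MvPolynomial Pointwise

/-- The set of zeros of a multivariate polynomial on the torus `((F_q)ˣ)^k`. -/
def torusZeros {K : Type} [Field K] {k : ℕ} (f : MvPolynomial (Fin k) K) :
    Set (Fin k → K) :=
  {a | (∀ i, a i ≠ 0) ∧ MvPolynomial.eval a f = 0}

/-- `N(S)`: the maximum number of torus zeros of a nonzero polynomial whose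
monomial support lies in `S`. -/
noncomputable def maxTorusZeros (K : Type) [Field K] {k : ℕ} (S : Set (Fin k →₀ ℕ)) : ℕ :=
  sSup {z | ∃ f : MvPolynomial (Fin k) K, f ≠ 0 ∧
    (↑f.support : Set (Fin k →₀ ℕ)) ⊆ S ∧ z = (torusZeros f).ncard}

/-- An integral convex polytope: the convex hull of a nonempty finite set of
integer lattice points. -/
def IsIntegralPolytope {n : ℕ} (P : Set (Fin n → ℝ)) : Prop :=
  ∃ V : Finset (Fin n → ℤ), V.Nonempty ∧
    P = convexHull ℝ ((fun (v : Fin n → ℤ) (i : Fin n) => (v i : ℝ)) '' ↑V)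

/-- `P ⊆ [0, q-2]^n`. -/
def InBox (q : ℕ) {n : ℕ} (P : Set (Fin n → ℝ)) : Prop :=
  ∀ x ∈ P, ∀ i, 0 ≤ x i ∧ x i ≤ (q : ℝ) - 2

/-- Lattice points of `P` regarded as exponent vectors. -/
def latticeExps {n : ℕ} (P : Set (Fin n → ℝ)) : Set (Fin n →₀ ℕ) :=
  {d | (fun i => ((d i : ℕ) : ℝ)) ∈ P}

/-- `N(P)`: the maximal number of torus zeros of a nonzero polynomial supported
on the lattice points of `P`. -/
noncomputable def NP (K : Type) [Field K] {n : ℕ} (P : Set (Fin n → ℝ)) : ℕ :=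
  maxTorusZeros K (latticeExps P)

/-- The relative minimum distance `δ(P) = ((q-1)^n - N(P))/(q-1)^n`. -/
noncomputable def deltaP (K : Type) [Field K] [Fintype K] {n : ℕ}
    (P : Set (Fin n → ℝ)) : ℝ :=
  (((Fintype.card K : ℝ) - 1) ^ n - (NP K P : ℝ)) / ((Fintype.card K : ℝ) - 1) ^ n

/-- A lattice polytope of positive dimension: an integral convex polytope that is
not a single point. -/
def IsPosDimLatticePolytope {n : ℕ} (Q : Set (Fin n → ℝ)) : Prop :=
  IsIntegralPolytope Q ∧ ¬ Q.Subsingleton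

/-- `L(P) ≥ N`: some lattice subpolytope of `P` is the Minkowski sum of at least `N`
lattice polytopes of positive dimension. -/
def HasMinkowskiLength {n : ℕ} (P : Set (Fin n → ℝ)) (N : ℕ) : Prop :=
  ∃ Q : Set (Fin n → ℝ), Q ⊆ P ∧ IsIntegralPolytope Q ∧
    ∃ l : ℕ, N ≤ l ∧ ∃ Qs : Fin l → Set (Fin n → ℝ),
      (∀ j, IsPosDimLatticePolytope (Qs j)) ∧ Q = ∑ j, Qs j

lemma exists_c_avg {A U : Type*} [Fintype A] [Fintype U] [DecidableEq U] [Nonempty U] (l : ℕ)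
    (t : A → Fin l → U) : ∃ c : Fin l → U,
    (Finset.univ.filter (fun a => ∀ j, c j ≠ t a j)).card * Fintype.card U ^ l
      ≤ Fintype.card A * (Fintype.card U - 1) ^ l := by
  by_contra! h
  have h1 := Finset.sum_lt_sum_of_nonempty (s := (Finset.univ : Finset (Fin l → U)))
    Finset.univ_nonempty (fun c _ => h c)
  have h2 : ∑ c : Fin l → U, (Finset.univ.filter (fun a => ∀ j, c j ≠ t a j)).card
      = Fintype.card A * (Fintype.card U - 1) ^ l := by
    have := Finset.sum_card_bipartiteAbove_eq_sum_card_bipartiteBelow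
      (s := (Finset.univ : Finset (Fin l → U))) (t := (Finset.univ : Finset A))
      (fun c a => ∀ j, c j ≠ t a j)
    unfold Finset.bipartiteAbove Finset.bipartiteBelow at this
    rw [this]
    have h3 : ∀ a : A, (Finset.univ.filter (fun c : Fin l → U => ∀ j, c j ≠ t a j)).card
        = (Fintype.card U - 1) ^ l := by
      intro a
      have : Finset.univ.filter (fun c : Fin l → U => ∀ j, c j ≠ t a j)
          = Fintype.piFinset (fun j => Finset.univ.erase (t a j)) := by
        ext c; simp
      rw [this, Fintype.card_piFinset]
      simp [Finset.card_erase_of_mem, Finset.card_univ]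
    simp [h3]
  have h4 : (∑ c : Fin l → U, (Finset.univ.filter (fun a => ∀ j, c j ≠ t a j)).card
      * Fintype.card U ^ l) = Fintype.card A * (Fintype.card U - 1) ^ l * Fintype.card U ^ l := by
    rw [← Finset.sum_mul, h2]
  rw [h4] at h1
  simp [mul_comm] at h1

lemma supp_prod {σ K ι : Type*} [Field K] (T : Finset ι) (α β : ι → σ →₀ ℕ) (c : ι → K) :
    ∀ d ∈ (∏ j ∈ T, (monomial (α j) (1:K) - monomial (β j) (c j))).support,
      ∃ γ : ι → σ →₀ ℕ, (∀ j ∈ T, γ j = α j ∨ γ j = β j) ∧ d = ∑ j ∈ T, γ j := by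
  classical
  induction T using Finset.induction_on with
  | empty =>
    intro d hd
    refine ⟨α, by simp, ?_⟩
    by_contra h
    simp [MvPolynomial.coeff_one] at hd
    simp at h
    exact h hd
  | insert j T hj ih =>
    intro d hd
    rw [Finset.prod_insert hj] at hd
    obtain ⟨x, hx, y, hy, rfl⟩ := Finset.mem_add.1 (support_mul _ _ hd)
    obtain ⟨γ, hγ, rfl⟩ := ih y hy
    refine ⟨Function.update γ j x, ?_, ?_⟩
    · intro i hi
      by_cases hij : i = j
      · subst hij
        simp only [Function.update_self]
        by_contra! h
        simp [coeff_monomial, h.1.symm, h.2.symm] at hx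
      · simp [hij]
        exact hγ i ((Finset.mem_insert.1 hi).resolve_left hij)
    · rw [Finset.sum_insert hj]
      simp
      refine Finset.sum_congr rfl fun i hi => ?_
      rw [Function.update_of_ne]
      rintro rfl; exact hj hi

lemma torusZeros_ncard {K : Type} [Field K] [Fintype K] [DecidableEq K] {n : ℕ}
    (f : MvPolynomial (Fin n) K) :
    (torusZeros f).ncard = (Finset.univ.filter
      (fun a : Fin n → Kˣ => MvPolynomial.eval (fun i => (a i : K)) f = 0)).card := by
  classical
  have hinj : Function.Injective (fun (a : Fin n → Kˣ) (i : Fin n) => (a i : K)) := by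
    intro a b h
    funext i
    exact Units.ext (congrFun h i)
  rw [← Set.ncard_coe_finset, ← Set.ncard_image_of_injective _ hinj]
  congr 1
  ext a
  simp only [torusZeros, Set.mem_setOf_eq, Set.mem_image, Finset.coe_filter, Finset.mem_univ,
    true_and]
  constructor
  · rintro ⟨h1, h2⟩
    exact ⟨fun i => Units.mk0 (a i) (h1 i), by simpa using h2, by simp⟩
  · rintro ⟨b, hb, rfl⟩
    exact ⟨fun i => (b i).ne_zero, hb⟩

lemma torusZeros_le {K : Type} [Field K] [Fintype K] [DecidableEq K] {n : ℕ}
    (f : MvPolynomial (Fin n) K) : (torusZeros f).ncard ≤ Fintype.card Kˣ ^ n := by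
  rw [torusZeros_ncard]
  refine (Finset.card_le_univ _).trans ?_
  simp

lemma le_NP {K : Type} [Field K] [Fintype K] [DecidableEq K] {n : ℕ} (P : Set (Fin n → ℝ))
    (f : MvPolynomial (Fin n) K) (hf : f ≠ 0)
    (hs : (↑f.support : Set (Fin n →₀ ℕ)) ⊆ latticeExps P) :
    (torusZeros f).ncard ≤ NP K P := by
  refine le_csSup ⟨Fintype.card Kˣ ^ n, ?_⟩ ⟨f, hf, hs, rfl⟩
  rintro z ⟨g, -, -, rfl⟩
  exact torusZeros_le g

lemma NP_lt {K : Type} [Field K] [Fintype K] [DecidableEq K] {n : ℕ} (P : Set (Fin n → ℝ))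
    (hbox : InBox (Fintype.card K) P) :
    NP K P < Fintype.card Kˣ ^ n := by
  have hpos : 0 < Fintype.card Kˣ ^ n := pow_pos Fintype.card_pos _
  have key : ∀ f : MvPolynomial (Fin n) K, f ≠ 0 →
      (↑f.support : Set (Fin n →₀ ℕ)) ⊆ latticeExps P →
      (torusZeros f).ncard < Fintype.card Kˣ ^ n := by
    intro f hf hs
    refine lt_of_le_of_ne (torusZeros_le f) fun h => hf ?_
    rw [torusZeros_ncard] at h
    have h2 : Finset.univ.filter
      (fun a : Fin n → Kˣ => MvPolynomial.eval (fun i => (a i : K)) f = 0) = Finset.univ := by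
      rw [← Finset.card_eq_iff_eq_univ, h]; simp
    have hc1 : 1 < Fintype.card K := Fintype.one_lt_card
    refine MvPolynomial.eq_zero_of_eval_zero_at_prod_finset f
      (fun _ => Finset.univ.erase 0) ?_ ?_
    · intro i
      rw [Finset.card_erase_of_mem (Finset.mem_univ _), Finset.card_univ,
        degreeOf_lt_iff (by omega)]
      intro m hm
      have := (hbox _ (hs hm) i).2
      have h3 : ((m i + 2 : ℕ) : ℝ) ≤ (Fintype.card K : ℝ) := by push_cast; linarith
      have h4 : m i + 2 ≤ Fintype.card K := by exact_mod_cast h3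
      omega
    · intro x hx
      have h3 : (fun i => Units.mk0 (x i) (by simpa using hx i)) ∈ Finset.univ.filter
        (fun a : Fin n → Kˣ => MvPolynomial.eval (fun i => (a i : K)) f = 0) := by
        rw [h2]; exact Finset.mem_univ _
      simpa using h3
  have hle : NP K P ≤ Fintype.card Kˣ ^ n - 1 := by
    refine csSup_le' ?_
    rintro z ⟨f, hf, hs, rfl⟩
    have := key f hf hs
    omega
  omega

lemma two_points {n : ℕ} {Q : Set (Fin n → ℝ)} (h : IsPosDimLatticePolytope Q) :
    ∃ v w : Fin n → ℤ, v ≠ w ∧ (fun i => (v i : ℝ)) ∈ Q ∧ (fun i => (w i : ℝ)) ∈ Q := by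
  obtain ⟨⟨V, hV, rfl⟩, hns⟩ := h
  by_contra! hc
  apply hns
  have hmem : ∀ v ∈ V, (fun i => (v i : ℝ)) ∈
      convexHull ℝ ((fun (v : Fin n → ℤ) (i : Fin n) => (v i : ℝ)) '' ↑V) :=
    fun v hv => subset_convexHull ℝ _ ⟨v, hv, rfl⟩
  obtain ⟨v, hv⟩ := hV
  have : (fun (v : Fin n → ℤ) (i : Fin n) => (v i : ℝ)) '' (↑V : Set (Fin n → ℤ))
      = {fun i => (v i : ℝ)} := by
    ext x
    constructor
    · rintro ⟨w, hw, rfl⟩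
      by_cases hvw : v = w
      · subst hvw; rfl
      · exact absurd (hmem w hw) (hc v w hvw (hmem v hv))
    · rintro rfl
      exact ⟨v, hv, rfl⟩
  rw [this, convexHull_singleton]
  exact Set.subsingleton_singleton

lemma eval_mono {K : Type} [Field K] {n : ℕ} (a : Fin n → Kˣ) (d : Fin n →₀ ℕ) (c : K) :
    MvPolynomial.eval (fun i => (a i : K)) (monomial d c)
      = c * ((∏ i, a i ^ d i : Kˣ) : K) := by
  rw [eval_monomial, Finsupp.prod_fintype _ _ (by simp)]
  simp

lemma exists_poly {K : Type} [Field K] [Fintype K] [DecidableEq K] {n l : ℕ}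
    (P : Set (Fin n → ℝ)) (q : ℕ) (hbox : InBox q P) (Qs : Fin l → Set (Fin n → ℝ))
    (hQ : ∀ j, IsPosDimLatticePolytope (Qs j)) (hsub : ∑ j, Qs j ⊆ P) :
    ∃ f : MvPolynomial (Fin n) K, f ≠ 0 ∧ (↑f.support : Set (Fin n →₀ ℕ)) ⊆ latticeExps P ∧
      (Finset.univ.filter (fun a : Fin n → Kˣ =>
        MvPolynomial.eval (fun i => (a i : K)) f ≠ 0)).card * Fintype.card Kˣ ^ l
        ≤ Fintype.card Kˣ ^ n * (Fintype.card Kˣ - 1) ^ l := by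
  choose v w hvw hv hw using fun j => two_points (hQ j)
  let s : Fin l → Fin n →₀ ℕ := fun j =>
    Finsupp.equivFunOnFinite.symm fun i => (v j i).natAbs + (w j i).natAbs
  let α : Fin l → Fin n →₀ ℕ := fun j =>
    Finsupp.equivFunOnFinite.symm fun i => (v j i + s j i).toNat
  let β : Fin l → Fin n →₀ ℕ := fun j =>
    Finsupp.equivFunOnFinite.symm fun i => (w j i + s j i).toNat
  have hα : ∀ j i, ((α j i : ℕ) : ℤ) = v j i + s j i := by
    intro j i
    simp only [α, s, Finsupp.equivFunOnFinite_symm_apply_apply]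
    omega
  have hβ : ∀ j i, ((β j i : ℕ) : ℤ) = w j i + s j i := by
    intro j i
    simp only [β, s, Finsupp.equivFunOnFinite_symm_apply_apply]
    omega
  have hαβ : ∀ j, α j ≠ β j := by
    intro j h
    apply hvw j
    funext i
    have h1 := hα j i
    have h2 := hβ j i
    rw [h] at h1
    omega
  obtain ⟨c, hc⟩ := exists_c_avg (A := Fin n → Kˣ) (U := Kˣ) l
    (fun a j => (∏ i, a i ^ α j i) / (∏ i, a i ^ β j i))
  set g : MvPolynomial (Fin n) K :=
    ∏ j, (monomial (α j) (1:K) - monomial (β j) (c j : K)) with hg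
  have hg0 : g ≠ 0 := by
    rw [hg, Finset.prod_ne_zero_iff]
    intro j _ h
    have := congrArg (coeff (α j)) h
    simp [coeff_monomial, (hαβ j).symm] at this
  set S : Fin n →₀ ℕ := ∑ j, s j with hS
  have hsupp : ∀ d ∈ g.support, (fun i => ((d i : ℕ) : ℝ) - ((S i : ℕ) : ℝ)) ∈ P := by
    intro d hd
    obtain ⟨γ, hγ, rfl⟩ := supp_prod Finset.univ α β (fun j => (c j : K)) d hd
    apply hsub
    have := Set.finsetSum_mem_finsetSum Finset.univ Qs
      (fun j i => ((γ j i : ℕ) : ℝ) - ((s j i : ℕ) : ℝ)) ?_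
    · convert this using 1
      funext i
      simp [hS, Finsupp.finsetSum_apply, Finset.sum_apply]
    · intro j _
      rcases hγ j (Finset.mem_univ _) with h | h
      · convert hv j using 2 with i
        rw [h]
        have : ((α j i : ℕ) : ℝ) = v j i + s j i := by exact_mod_cast hα j i
        rw [this]; ring
      · convert hw j using 2 with i
        rw [h]
        have : ((β j i : ℕ) : ℝ) = w j i + s j i := by exact_mod_cast hβ j i
        rw [this]; ring
  have hmod : g = monomial S 1 * g.divMonomial S := by
    have h0 : g.modMonomial S = 0 := by
      ext d
      by_cases hle : S ≤ d
      · rw [coeff_modMonomial_of_le _ hle]; simp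
      · rw [coeff_modMonomial_of_not_le _ hle, coeff_zero]
        by_contra hne
        apply hle
        intro i
        have := (hbox _ (hsupp d (mem_support_iff.2 hne)) i).1
        have h3 : ((S i : ℕ) : ℝ) ≤ ((d i : ℕ) : ℝ) := by linarith
        exact_mod_cast h3
    have := divMonomial_add_modMonomial g S
    rw [h0, add_zero] at this
    exact this.symm
  refine ⟨g.divMonomial S, ?_, ?_, ?_⟩
  · intro h
    rw [h, mul_zero] at hmod
    exact hg0 hmod
  · intro d hd
    have hd' : coeff (S + d) g ≠ 0 := by
      rw [← coeff_divMonomial]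
      exact mem_support_iff.1 hd
    have := hsupp _ (mem_support_iff.2 hd')
    simpa [latticeExps] using this
  · have hcard : Fintype.card (Fin n → Kˣ) = Fintype.card Kˣ ^ n := by simp
    rw [hcard] at hc
    refine le_trans (Nat.mul_le_mul_right _ (Finset.card_le_card ?_)) hc
    intro a ha
    simp only [Finset.mem_filter, Finset.mem_univ, true_and] at ha ⊢
    intro j hj
    have hga : MvPolynomial.eval (fun i => (a i : K)) g = 0 := by
      rw [hg, map_prod]
      refine Finset.prod_eq_zero (Finset.mem_univ j) ?_
      rw [map_sub, eval_mono, eval_mono, one_mul, ← Units.val_mul, hj, div_mul_cancel, sub_self]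
    rw [hmod, map_mul, eval_mono, one_mul] at hga
    exact ha ((mul_eq_zero.1 hga).resolve_left (Units.ne_zero _))

lemma delta_le {K : Type} [Field K] [Fintype K] [DecidableEq K] {n : ℕ}
    (P : Set (Fin n → ℝ)) (hbox : InBox (Fintype.card K) P) (N : ℕ)
    (h : HasMinkowskiLength P N) :
    deltaP K P ≤ (((Fintype.card Kˣ : ℝ) - 1) / (Fintype.card Kˣ : ℝ)) ^ N := by
  obtain ⟨Q, hQP, -, l, hNl, Qs, hQs, rfl⟩ := h
  obtain ⟨f, hf, hs, hcard⟩ := exists_poly (K := K) P _ hbox Qs hQs hQP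
  have h1 := le_NP P f hf hs
  rw [torusZeros_ncard] at h1
  have h2 := Finset.card_filter_add_card_filter_not (s := (Finset.univ : Finset (Fin n → Kˣ)))
    (fun a : Fin n → Kˣ => MvPolynomial.eval (fun i => (a i : K)) f = 0)
  have hu : Fintype.card K = Fintype.card Kˣ + 1 := by
    have := Fintype.card_units (α := K)
    have : 0 < Fintype.card K := Fintype.card_pos
    omega
  have hu1 : 1 ≤ Fintype.card Kˣ := Fintype.card_pos
  rw [Finset.card_univ, Fintype.card_fun, Fintype.card_fin] at h2
  unfold deltaP
  rw [hu]
  generalize Fintype.card Kˣ = u at *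
  simp only [ne_eq] at hcard
  set z := (Finset.univ.filter (fun a : Fin n → Kˣ =>
    MvPolynomial.eval (fun i => (a i : K)) f = 0)).card
  set y := (Finset.univ.filter (fun a : Fin n → Kˣ =>
    ¬ MvPolynomial.eval (fun i => (a i : K)) f = 0)).card
  have hu1' : (1:ℝ) ≤ u := by exact_mod_cast hu1
  have hc' : (y:ℝ) * (u:ℝ) ^ l ≤ (u:ℝ) ^ n * ((u:ℝ) - 1) ^ l := by
    have : ((y * u ^ l : ℕ) : ℝ) ≤ ((u ^ n * (u - 1) ^ l : ℕ) : ℝ) := by exact_mod_cast hcard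
    push_cast [Nat.cast_sub hu1] at this
    exact this
  have h1' : (z:ℝ) ≤ NP K P := by exact_mod_cast h1
  have h2' : (z:ℝ) + y = (u:ℝ) ^ n := by exact_mod_cast h2
  have hun : (0:ℝ) < (u:ℝ) ^ n := by positivity
  have hul : (0:ℝ) < (u:ℝ) ^ l := by positivity
  have h5 : (((u + 1 : ℕ) : ℝ) - 1) = u := by push_cast; ring
  rw [h5]
  calc ((u:ℝ) ^ n - NP K P) / (u:ℝ) ^ n ≤ y / (u:ℝ) ^ n := by gcongr; linarith
    _ ≤ (((u:ℝ) - 1) / u) ^ l := by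
      rw [div_pow, div_le_div_iff₀ hun hul]
      linarith
    _ ≤ (((u:ℝ) - 1) / u) ^ N := by
      apply pow_le_pow_of_le_one _ _ hNl
      · exact div_nonneg (by linarith) (by linarith)
      · rw [div_le_one (by linarith)]; linarith

lemma delta_pos {K : Type} [Field K] [Fintype K] [DecidableEq K] {n : ℕ}
    (P : Set (Fin n → ℝ)) (hbox : InBox (Fintype.card K) P) : 0 < deltaP K P := by
  have h := NP_lt P hbox
  have hu : Fintype.card K = Fintype.card Kˣ + 1 := by
    have := Fintype.card_units (α := K)
    have : 0 < Fintype.card K := Fintype.card_pos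
    omega
  have hu1 : 1 ≤ Fintype.card Kˣ := Fintype.card_pos
  unfold deltaP
  rw [hu]
  generalize Fintype.card Kˣ = u at *
  have h5 : (((u + 1 : ℕ) : ℝ) - 1) = u := by push_cast; ring
  rw [h5]
  have : (NP K P : ℝ) < (u:ℝ) ^ n := by exact_mod_cast h
  have hu1' : (1:ℝ) ≤ u := by exact_mod_cast hu1
  exact div_pos (by linarith) (by positivity)

/-- If the full Minkowski lengths `L(P_i)` of an infinite family are unbounded, then
the limit of the relative minimum distances is `0`. -/
theorem stmt17 (K : Type) [Field K] [Fintype K] (q : ℕ) (hq : Fintype.card K = q)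
    (n : ℕ → ℕ) (P : ∀ i, Set (Fin (n i) → ℝ))
    (hpoly : ∀ i, IsIntegralPolytope (P i)) (hbox : ∀ i, InBox q (P i))
    (hL : ∀ N, ∃ i, HasMinkowskiLength (P i) N)
    (δ : ℝ)
    (hδ : Filter.Tendsto (fun i => deltaP K (P i)) Filter.atTop (nhds δ)) :
    δ = 0 := by
  classical
  subst hq
  have hpos : ∀ i, 0 < deltaP K (P i) := fun i => delta_pos (P i) (hbox i)
  have h0 : 0 ≤ δ := ge_of_tendsto' hδ fun i => (hpos i).le
  by_contra hne
  have hδ0 : 0 < δ := lt_of_le_of_ne h0 (Ne.symm hne)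
  obtain ⟨M, hM⟩ := Filter.eventually_atTop.1 (hδ.eventually (lt_mem_nhds (half_lt_self hδ0)))
  have hfin : ∀ M : ℕ, ∃ η : ℝ, 0 < η ∧ ∀ i < M, η ≤ deltaP K (P i) := by
    intro M
    induction M with
    | zero => exact ⟨1, one_pos, by simp⟩
    | succ m ih =>
      obtain ⟨η, h1, h2⟩ := ih
      refine ⟨min η (deltaP K (P m)), lt_min h1 (hpos m), fun i hi => ?_⟩
      rcases Nat.lt_succ_iff_lt_or_eq.1 hi with h | rfl
      · exact (min_le_left _ _).trans (h2 i h)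
      · exact min_le_right _ _
  obtain ⟨η, hη, hη2⟩ := hfin M
  have hu1 : (1:ℝ) ≤ (Fintype.card Kˣ : ℝ) := by
    exact_mod_cast (Fintype.card_pos : 0 < Fintype.card Kˣ)
  have hr : ((Fintype.card Kˣ : ℝ) - 1) / (Fintype.card Kˣ : ℝ) < 1 := by
    rw [div_lt_one (by linarith)]; linarith
  obtain ⟨N, hN⟩ := exists_pow_lt_of_lt_one (lt_min hη (half_pos hδ0)) hr
  obtain ⟨i, hi⟩ := hL N
  have hle := (delta_le (P i) (hbox i) N hi).trans_lt hN
  rcases lt_or_ge i M with h | h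
  · exact absurd (hη2 i h) (not_le.2 (hle.trans_le (min_le_left _ _)))
  · exact absurd (hM i h) (not_lt.2 (hle.trans_le (min_le_right _ _)).le)
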